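/- Let n ≥ 3. The number of proper 3-edge-colorings of the circular ladder graph CL_n equals 3 times the number of functions σ : (ZMod n) × Bool → ZMod 3 with all values in {1, 2} ⊆ ZMod 3 satisfying σ(i,false) + σ(i,true) + σ(i+1,true) + σ(i+1,false) = 0 for every i ∈ ZMod n, Σ_{i} σ(i,false) = 0, and Σ_{i} σ(i,true) = 0 (the Heawood correspondence for CL_n). -/

import Mathlib

/-- The circular ladder graph `CL_n`: vertices `(ZMod n) × Bool`, with `(i,b)`
adjacent to `(j,c)` iff (`b = c` and (`j = i + 1` or `i = j + 1`)) or (`b ≠ c` and `i = j`). -/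
def circularLadder (n : ℕ) : SimpleGraph (ZMod n × Bool) :=
  SimpleGraph.fromRel (fun p q =>
    (p.2 = q.2 ∧ (q.1 = p.1 + 1 ∨ p.1 = q.1 + 1)) ∨ (p.2 ≠ q.2 ∧ p.1 = q.1))

/-- A Tait coloring (proper 3-edge-coloring): distinct edges sharing a vertex get
different colors in `ZMod 3`. -/
def IsTaitColoring {V : Type*} (G : SimpleGraph V) (C : G.edgeSet → ZMod 3) : Prop :=
  ∀ e₁ e₂ : G.edgeSet, e₁ ≠ e₂ →
    (∃ v : V, v ∈ (e₁ : Sym2 V) ∧ v ∈ (e₂ : Sym2 V)) → C e₁ ≠ C e₂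

/-- The number of proper 3-edge-colorings of `G`. -/
noncomputable def numTaitColorings {V : Type*} (G : SimpleGraph V) : ℕ :=
  Nat.card {C : G.edgeSet → ZMod 3 // IsTaitColoring G C}

/-!
Three colors in `ZMod 3` are pairwise distinct iff two of them differ and all three sum to zero.
So a Tait coloring of `CL_n` amounts to two cyclic sequences `f`, `g` of rail colors, each with
nonzero differences, such that `f i + f (i + 1) = g i + g (i + 1)`: the common value is minus the
color of the rung between them. The last condition says that `s = f - g` changes sign at every step,
and then `Δ s = -2 s = s`, so the differences of `g` are `Δ f - s`.

A Heawood vector `σ` is `Δ f` on one side and `-Δ g` on the other, the sign reflecting the opposite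
orientation of the two sides. Its quadrilateral equations say that `s = σ (·, false) + σ (·, true)`
changes sign at every step, which forces `∑ s = 0` and makes one of the two `n`-gon equations follow
from the other. The remaining one, `∑ Δ f = 0`, is exactly what is needed to recover `f` from `Δ f`,
up to the three choices of `f 0`.
-/

section CyclicDifferences

open scoped fwdDiff

variable {n : ℕ} [NeZero n] {A B : Type*} [AddCommGroup A]

theorem sum_range_natCast_zmod (f : ZMod n → A) :
    ∑ k ∈ Finset.range n, f k = ∑ i, f i :=
  Finset.sum_bij' (fun k _ ↦ (k : ZMod n)) (fun i _ ↦ i.val) (by simp)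
    (by simp [ZMod.val_lt])
    (fun k hk ↦ ZMod.val_natCast_of_lt (Finset.mem_range.mp hk)) (by simp) (by simp)

theorem sum_fwdDiff_eq_zero {G : Type*} [AddCommGroup G] [Fintype G] (c : G) (g : G → A) :
    ∑ i, Δ_[c] g i = 0 := by
  simp only [fwdDiff, Finset.sum_sub_distrib]
  exact sub_eq_zero.mpr (Equiv.sum_comp (Equiv.addRight c) g)

theorem eq_of_fwdDiff_one_eq {g g' : ZMod n → A} (h₀ : g 0 = g' 0) (h : Δ_[1] g = Δ_[1] g') :
    g = g' := by
  have eq_natCast : ∀ k : ℕ, g k = g' k := by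
    intro k
    induction k with
    | zero => simpa using h₀
    | succ k ih =>
      have hk := congrFun h k
      simp only [fwdDiff, ih] at hk
      simpa using sub_left_injective hk
  funext i
  obtain ⟨k, rfl⟩ := ZMod.natCast_zmod_surjective i
  exact eq_natCast k

theorem periodic_sum_range_natCast_zmod {h : ZMod n → A} (h_sum : ∑ i, h i = 0) :
    Function.Periodic (fun k : ℕ ↦ ∑ j ∈ Finset.range k, h j) n := by
  intro k
  simp [add_comm k n, Finset.sum_range_add, sum_range_natCast_zmod, h_sum]

theorem exists_fwdDiff_one_eq (x : A) {h : ZMod n → A} (h_sum : ∑ i, h i = 0) :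
    ∃ g : ZMod n → A, g 0 = x ∧ Δ_[1] g = h := by
  let g (i : ZMod n) : A := x + ∑ j ∈ Finset.range i.val, h j
  have g_natCast (k : ℕ) : g k = x + ∑ j ∈ Finset.range k, h j := by
    simp only [g, ZMod.val_natCast]
    rw [(periodic_sum_range_natCast_zmod h_sum).map_mod_nat k]
  refine ⟨g, by simp [g], ?_⟩
  funext i
  obtain ⟨k, rfl⟩ := ZMod.natCast_zmod_surjective i
  rw [fwdDiff, ← Nat.cast_succ, g_natCast, g_natCast, Finset.sum_range_succ]
  abel

theorem card_subtype_fwdDiff_one (P : (ZMod n → A) → B → Prop) :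
    Nat.card {p : (ZMod n → A) × B // P (Δ_[1] p.1) p.2} =
      Nat.card A * Nat.card {p : (ZMod n → A) × B // ∑ i, p.1 i = 0 ∧ P p.1 p.2} := by
  rw [← Nat.card_prod]
  refine Nat.card_eq_of_bijective
    (fun p ↦ (p.1.1 0, ⟨(Δ_[1] p.1.1, p.1.2), sum_fwdDiff_eq_zero 1 p.1.1, p.2⟩)) ⟨?_, ?_⟩
  · rintro ⟨⟨g, b⟩, _⟩ ⟨⟨g', b'⟩, _⟩ hgg'
    simp only [Prod.mk.injEq, Subtype.mk.injEq] at hgg' ⊢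
    exact ⟨eq_of_fwdDiff_one_eq hgg'.1 hgg'.2.1, hgg'.2.2⟩
  · rintro ⟨x, ⟨h, b⟩, h_sum, hP⟩
    obtain ⟨g, rfl, rfl⟩ := exists_fwdDiff_one_eq x h_sum
    exact ⟨⟨(g, b), hP⟩, rfl⟩

theorem two_nsmul_sum_eq_zero_of_antiperiodic {G : Type*} [AddGroup G] [Fintype G] {s : G → A}
    {c : G} (hs : Function.Antiperiodic s c) : 2 • ∑ i, s i = 0 := by
  have sum_eq_neg : ∑ i, s i = -∑ i, s i := calc
    ∑ i, s i = ∑ i, s (i + c) := (Equiv.sum_comp (Equiv.addRight c) s).symm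
    _ = -∑ i, s i := by simp only [hs _, Finset.sum_neg_distrib]
  rw [two_nsmul]
  exact eq_neg_iff_add_eq_zero.mp sum_eq_neg

theorem fwdDiff_eq_self_of_antiperiodic {M R : Type*} [AddCommMonoid M] [CommRing R] [CharP R 3]
    {s : M → R} {c : M} (hs : Function.Antiperiodic s c) : Δ_[c] s = s := by
  funext i
  have three_eq_zero : (3 : R) = 0 := mod_cast CharP.cast_eq_zero R 3
  rw [fwdDiff, hs i]
  linear_combination -s i * three_eq_zero

end CyclicDifferences

section Edges

variable {n : ℕ}

/-- The edges of `CL_n`, listed so that `.inl (i, b)` is the rail joining `(i - 1, b)` to `(i, b)`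
and `.inr i` is the rung at `i`. With this indexing the rails at the vertex `(i, b)` are
`.inl (i, b)` and `.inl (i + 1, b)`. -/
def ladderEdge : (ZMod n × Bool) ⊕ ZMod n → Sym2 (ZMod n × Bool)
  | .inl (i, b) => s((i - 1, b), (i, b))
  | .inr i => s((i, false), (i, true))

theorem mem_ladderEdge_iff {i : ZMod n} {b : Bool} {x : (ZMod n × Bool) ⊕ ZMod n} :
    (i, b) ∈ ladderEdge x ↔ x = .inl (i, b) ∨ x = .inl (i + 1, b) ∨ x = .inr i := by
  rcases x with ⟨j, c⟩ | j
  · simp only [ladderEdge, Sym2.mem_iff, Prod.mk.injEq, Sum.inl.injEq, reduceCtorEq, or_false,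
      eq_sub_iff_add_eq]
    grind
  · cases b <;> simp [ladderEdge, eq_comm]

theorem ladderEdge_injective (h2 : (2 : ZMod n) ≠ 0) :
    Function.Injective (ladderEdge (n := n)) := by
  rintro (⟨i, b⟩ | i) (⟨j, c⟩ | j) hij <;>
    simp only [ladderEdge, Sym2.eq_iff, Prod.mk.injEq] at hij
  · rcases hij with ⟨-, rfl, rfl⟩ | ⟨⟨hi, -⟩, hj, -⟩
    · rfl
    · exact absurd (by linear_combination hj - hi) h2
  all_goals grind

theorem ladderEdge_mem_edgeSet [Nontrivial (ZMod n)] (x : (ZMod n × Bool) ⊕ ZMod n) :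
    ladderEdge x ∈ (circularLadder n).edgeSet := by
  rcases x with ⟨i, b⟩ | i <;> simp [ladderEdge, circularLadder]

theorem exists_ladderEdge_eq {e : Sym2 (ZMod n × Bool)} (he : e ∈ (circularLadder n).edgeSet) :
    ∃ x, ladderEdge x = e := by
  induction e with | _ p q
  obtain ⟨⟨i, b⟩, ⟨j, c⟩⟩ := p, q
  rw [circularLadder, SimpleGraph.mem_edgeSet, SimpleGraph.fromRel_adj] at he
  have hij : (b = c ∧ (j = i + 1 ∨ i = j + 1)) ∨ (b ≠ c ∧ i = j) := by grind
  rcases hij with ⟨rfl, rfl | rfl⟩ | ⟨hbc, rfl⟩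
  · exact ⟨.inl (i + 1, b), by simp [ladderEdge]⟩
  · exact ⟨.inl (j + 1, b), by simp [ladderEdge]⟩
  · exact ⟨.inr i, by cases b <;> cases c <;> simp_all [ladderEdge]⟩

theorem range_ladderEdge [Nontrivial (ZMod n)] :
    Set.range ladderEdge = (circularLadder n).edgeSet :=
  (Set.range_subset_iff.mpr ladderEdge_mem_edgeSet).antisymm fun _ ↦ exists_ladderEdge_eq

/-- The enumeration of the edges of `CL_n` by `ladderEdge`. The condition `2 ≠ 0` in `ZMod n`
encodes `n ≠ 1, 2`: the rails are loops for `n = 1` and coincide in pairs for `n = 2`. -/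
noncomputable def ladderEdgeEquiv (h2 : (2 : ZMod n) ≠ 0) :
    (ZMod n × Bool) ⊕ ZMod n ≃ (circularLadder n).edgeSet :=
  haveI : Nontrivial (ZMod n) := ⟨2, 0, h2⟩
  (Equiv.ofInjective ladderEdge (ladderEdge_injective h2)).trans (Equiv.setCongr range_ladderEdge)

theorem coe_ladderEdgeEquiv (h2 : (2 : ZMod n) ≠ 0) (x : (ZMod n × Bool) ⊕ ZMod n) :
    (ladderEdgeEquiv h2 x : Sym2 (ZMod n × Bool)) = ladderEdge x :=
  rfl

end Edges

section Colorings

variable {n : ℕ}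

theorem isTaitColoring_iff_injOn {V : Type*} {G : SimpleGraph V} {C : G.edgeSet → ZMod 3} :
    IsTaitColoring G C ↔ ∀ v, Set.InjOn C {e | v ∈ (e : Sym2 V)} := by
  constructor
  · intro h v e₁ he₁ e₂ he₂
    contrapose!
    exact fun hne ↦ h e₁ e₂ hne ⟨v, he₁, he₂⟩
  · rintro h e₁ e₂ hne ⟨v, he₁, he₂⟩
    exact (h v).ne he₁ he₂ hne

theorem zmod_three_pairwise_ne_iff :
    ∀ x y z : ZMod 3, (x ≠ y ∧ x ≠ z ∧ y ≠ z) ↔ x ≠ y ∧ x + y + z = 0 := by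
  decide

/-- The Tait colorings of `CL_n` in terms of the edge indices of `ladderEdge`, with distinctness of
the three colors at a vertex encoded as in `zmod_three_pairwise_ne_iff`. -/
def IsLadderColoring (c : (ZMod n × Bool) ⊕ ZMod n → ZMod 3) : Prop :=
  ∀ i b, c (.inl (i, b)) ≠ c (.inl (i + 1, b)) ∧
    c (.inl (i, b)) + c (.inl (i + 1, b)) + c (.inr i) = 0

theorem setOf_mem_edge_eq_image (h2 : (2 : ZMod n) ≠ 0) (i : ZMod n) (b : Bool) :
    {e : (circularLadder n).edgeSet | (i, b) ∈ (e : Sym2 (ZMod n × Bool))} =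
      ladderEdgeEquiv h2 '' {.inl (i, b), .inl (i + 1, b), .inr i} := by
  ext e
  obtain ⟨x, rfl⟩ := (ladderEdgeEquiv h2).surjective e
  simp [coe_ladderEdgeEquiv, mem_ladderEdge_iff]

theorem isTaitColoring_circularLadder_iff (h2 : (2 : ZMod n) ≠ 0)
    {C : (circularLadder n).edgeSet → ZMod 3} :
    IsTaitColoring (circularLadder n) C ↔ IsLadderColoring (C ∘ ladderEdgeEquiv h2) := by
  have : Nontrivial (ZMod n) := ⟨2, 0, h2⟩
  rw [isTaitColoring_iff_injOn, Prod.forall]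
  refine forall₂_congr fun i b ↦ ?_
  rw [setOf_mem_edge_eq_image h2, ← Set.InjOn.comp_iff (ladderEdgeEquiv h2).injective.injOn,
    ← zmod_three_pairwise_ne_iff, Set.injOn_insert (by simp), Set.injOn_pair]
  simp only [Set.image_pair, Set.mem_insert_iff, Set.mem_singleton_iff]
  grind

theorem numTaitColorings_circularLadder (h2 : (2 : ZMod n) ≠ 0) :
    numTaitColorings (circularLadder n) =
      Nat.card {c : (ZMod n × Bool) ⊕ ZMod n → ZMod 3 // IsLadderColoring c} :=
  Nat.card_congr <| ((ladderEdgeEquiv h2).symm.arrowCongr (.refl _)).subtypeEquiv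
    fun _ ↦ isTaitColoring_circularLadder_iff h2

end Colorings

section HeawoodVectors

open scoped fwdDiff

variable {n : ℕ}

/-- The pair `(h, s)` stands for the vector `σ` with `h i = σ (i, false)` and
`s i = σ (i, false) + σ (i, true)`. The conditions are that `σ` is nowhere zero and satisfies the
equations of the quadrilaterals, which in these coordinates say that `s` changes sign at every
step. -/
def IsHeawoodPair (h s : ZMod n → ZMod 3) : Prop :=
  (∀ i, h i ≠ 0 ∧ h i ≠ s i) ∧ Function.Antiperiodic s 1

/-- The coloring of `CL_n` whose rails carry the colors `f` on the side `false` and `f - s` on the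
side `true`; each rung gets the color that makes the sum at its `false` end zero. -/
def ladderColors (f s : ZMod n → ZMod 3) : (ZMod n × Bool) ⊕ ZMod n → ZMod 3
  | .inl (i, false) => f i
  | .inl (i, true) => f i - s i
  | .inr i => -(f i + f (i + 1))

theorem isLadderColoring_ladderColors_iff {f s : ZMod n → ZMod 3} :
    IsLadderColoring (ladderColors f s) ↔ IsHeawoodPair (Δ_[1] f) s := by
  have rung_iff (i : ZMod n) :
      f i - s i + (f (i + 1) - s (i + 1)) + -(f i + f (i + 1)) = 0 ↔ s (i + 1) = -s i := by
    constructor <;> intro h <;> linear_combination -h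
  simp only [IsLadderColoring, Bool.forall_bool, ladderColors, add_neg_cancel, and_true,
    rung_iff, IsHeawoodPair, Function.Antiperiodic, ← and_assoc, forall_and]
  refine and_congr_left fun hs ↦ ?_
  have rail_ne_iff (i : ZMod n) : f i - s i ≠ f (i + 1) - s (i + 1) ↔ Δ_[1] f i ≠ s i := by
    have fwdDiff_s : s (i + 1) - s i = s i := congrFun (fwdDiff_eq_self_of_antiperiodic hs) i
    rw [fwdDiff, not_iff_not]
    constructor <;> intro h <;> linear_combination fwdDiff_s - h
  simp only [rail_ne_iff, fwdDiff, sub_ne_zero, ne_comm]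

theorem ladderColors_injective :
    Function.Injective fun p : (ZMod n → ZMod 3) × (ZMod n → ZMod 3) ↦ ladderColors p.1 p.2 := by
  rintro ⟨f, s⟩ ⟨f', s'⟩ hp
  have hf (i : ZMod n) : f i = f' i := congrFun hp (.inl (i, false))
  have hs (i : ZMod n) : f i - s i = f' i - s' i := congrFun hp (.inl (i, true))
  simp only [hf, sub_right_inj] at hs
  rw [funext hf, funext hs]

theorem IsLadderColoring.exists_ladderColors_eq {c : (ZMod n × Bool) ⊕ ZMod n → ZMod 3}
    (hc : IsLadderColoring c) : ∃ f s, ladderColors f s = c := by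
  refine ⟨fun i ↦ c (.inl (i, false)), fun i ↦ c (.inl (i, false)) - c (.inl (i, true)), ?_⟩
  funext x
  rcases x with ⟨i, _ | _⟩ | i
  · rfl
  · exact sub_sub_cancel _ _
  · exact neg_eq_of_add_eq_zero_right (hc i false).2

theorem card_isLadderColoring :
    Nat.card {c : (ZMod n × Bool) ⊕ ZMod n → ZMod 3 // IsLadderColoring c} =
      Nat.card {p : (ZMod n → ZMod 3) × (ZMod n → ZMod 3) // IsHeawoodPair (Δ_[1] p.1) p.2} := by
  symm
  refine Nat.card_eq_of_bijective
    (fun p ↦ ⟨ladderColors p.1.1 p.1.2, isLadderColoring_ladderColors_iff.mpr p.2⟩) ⟨?_, ?_⟩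
  · exact fun _ _ hp ↦ Subtype.ext (ladderColors_injective (congrArg Subtype.val hp))
  · rintro ⟨c, hc⟩
    obtain ⟨f, s, rfl⟩ := hc.exists_ladderColors_eq
    exact ⟨⟨(f, s), isLadderColoring_ladderColors_iff.mp hc⟩, rfl⟩

/-- The Heawood vectors of `CL_n`: nowhere zero solutions of the face equations. -/
def IsHeawoodVector [NeZero n] (σ : ZMod n × Bool → ZMod 3) : Prop :=
  (∀ v, σ v = 1 ∨ σ v = 2) ∧
    (∀ i : ZMod n, σ (i, false) + σ (i, true) + σ (i + 1, true) + σ (i + 1, false) = 0) ∧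
    (∑ i : ZMod n, σ (i, false)) = 0 ∧ (∑ i : ZMod n, σ (i, true)) = 0

theorem zmod_three_eq_one_or_two_iff : ∀ x : ZMod 3, x = 1 ∨ x = 2 ↔ x ≠ 0 := by
  decide

/-- The coordinates of `IsHeawoodPair` on the functions `σ`. -/
def heawoodPairEquiv :
    (ZMod n × Bool → ZMod 3) ≃ (ZMod n → ZMod 3) × (ZMod n → ZMod 3) where
  toFun σ := (fun i ↦ σ (i, false), fun i ↦ σ (i, false) + σ (i, true))
  invFun p
    | (i, false) => p.1 i
    | (i, true) => p.2 i - p.1 i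
  left_inv σ := by
    funext ⟨i, b⟩
    cases b <;> simp
  right_inv p := by simp

theorem isHeawoodVector_iff [NeZero n] {σ : ZMod n × Bool → ZMod 3} :
    IsHeawoodVector σ ↔ ∑ i, (heawoodPairEquiv σ).1 i = 0 ∧
      IsHeawoodPair (heawoodPairEquiv σ).1 (heawoodPairEquiv σ).2 := by
  have ne_zero_iff : (∀ v, σ v ≠ 0) ↔
      ∀ i, σ (i, false) ≠ 0 ∧ σ (i, false) ≠ σ (i, false) + σ (i, true) := by
    simp [Prod.forall, Bool.forall_bool]
  have quadrilaterals_iff :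
      (∀ i, σ (i, false) + σ (i, true) + σ (i + 1, true) + σ (i + 1, false) = 0) ↔
        Function.Antiperiodic (fun i ↦ σ (i, false) + σ (i, true)) 1 := by
    refine forall_congr' fun i ↦ ?_
    rw [eq_neg_iff_add_eq_zero]
    ring_nf
  have sum_true_eq_zero
      (hs : Function.Antiperiodic (fun i ↦ σ (i, false) + σ (i, true)) 1)
      (hf : ∑ i, σ (i, false) = 0) : ∑ i, σ (i, true) = 0 := by
    have two_nsmul_sum := two_nsmul_sum_eq_zero_of_antiperiodic hs
    rw [Finset.sum_add_distrib, hf, zero_add] at two_nsmul_sum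
    exact (by decide : ∀ x : ZMod 3, 2 • x = 0 → x = 0) _ two_nsmul_sum
  simp only [IsHeawoodVector, heawoodPairEquiv, IsHeawoodPair, zmod_three_eq_one_or_two_iff,
    Equiv.coe_fn_mk, ne_zero_iff, quadrilaterals_iff]
  tauto

theorem card_isHeawoodVector [NeZero n] :
    Nat.card {σ : ZMod n × Bool → ZMod 3 // IsHeawoodVector σ} =
      Nat.card {p : (ZMod n → ZMod 3) × (ZMod n → ZMod 3) //
        ∑ i, p.1 i = 0 ∧ IsHeawoodPair p.1 p.2} :=
  Nat.card_congr (heawoodPairEquiv.subtypeEquiv fun _ ↦ isHeawoodVector_iff)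

end HeawoodVectors

/-- The Heawood correspondence for `CL_n` (`n ≥ 3`): the number of proper
3-edge-colorings of the circular ladder graph equals three times the number of
its Heawood vectors, i.e. functions `σ : (ZMod n) × Bool → ZMod 3` with all values
in `{1, 2}` satisfying the propriety conditions of all faces. -/
theorem numTaitColorings_eq_three_mul_card_heawood (n : ℕ) [NeZero n] (hn : 3 ≤ n) :
    numTaitColorings (circularLadder n) =
    3 * Nat.card {σ : ZMod n × Bool → ZMod 3 //
      (∀ v, σ v = 1 ∨ σ v = 2) ∧
      (∀ i : ZMod n,
        σ (i, false) + σ (i, true) + σ (i + 1, true) + σ (i + 1, false) = 0) ∧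
      (∑ i : ZMod n, σ (i, false)) = 0 ∧ (∑ i : ZMod n, σ (i, true)) = 0} := by
  have two_ne_zero : (2 : ZMod n) ≠ 0 :=
    mod_cast mt (ZMod.natCast_eq_zero_iff 2 n).mp (Nat.not_dvd_of_pos_of_lt two_pos hn)
  rw [numTaitColorings_circularLadder two_ne_zero, card_isLadderColoring,
    card_subtype_fwdDiff_one IsHeawoodPair, ← card_isHeawoodVector, Nat.card_zmod]
  rfl
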